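/- Let a, b, c, d be positive real numbers with d > max{a, b, c} and a + c = b + d. Then the function f : ℝ → ℝ defined by f(x) = (sinh(a·x)·sinh(c·x))/(sinh(b·x)·sinh(d·x)) for x ≠ 0, extended by continuity at x = 0 (where f(0) = (a·c)/(b·d)), is infinitely divisible. -/

import Mathlib

open scoped ComplexOrder

/-- A function `φ : ℝ → ℂ` is positive definite if for every `n`, all real numbers
`x 1, …, x n` and complex numbers `c 1, …, c n`, the sum
`∑ i j, c i * conj (c j) * φ (x i - x j)` is a nonnegative real number. -/
def IsPosDefFun (φ : ℝ → ℂ) : Prop :=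
  ∀ (n : ℕ) (x : Fin n → ℝ) (c : Fin n → ℂ),
    0 ≤ ∑ i, ∑ j, c i * (starRingEnd ℂ) (c j) * φ (x i - x j)

/-- A real-valued function is infinitely divisible if every positive real power of it
is positive definite. -/
def IsInfDivFun (φ : ℝ → ℝ) : Prop :=
  ∀ r : ℝ, 0 < r → IsPosDefFun fun x => ((φ x ^ r : ℝ) : ℂ)

/-!
Let `F u x = sinh (u * x) / x`, with `F u 0 = u`. Then `∂ᵤ F u x = cosh (u * x)`, and
`cosh² - sinh² = 1` gives `∂ᵤ² log F = -(1 / F) ^ 2`. Euler's product writes `1 / F u x` as a limit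
of products of the functions `(1 + (s * x) ^ 2)⁻¹`, which are positive definite in `x`; hence
`-∂ᵤ² log F` is positive definite in `x`. A function of `u` whose derivative is positive definite
has positive definite increments, so two integrations in `u` show that
`log F a + log F c - log F b - log F d`, which is the logarithm of the given function, is positive
definite. Exponentials of nonnegative multiples of it are the required powers.
-/

open MeasureTheory Filter
open scoped Matrix Topology

lemma posSemidef_iff_forall_dotProduct_mulVec_nonneg {n : Type*} [Fintype n] {A : Matrix n n ℂ} :
    A.PosSemidef ↔ ∀ v, 0 ≤ star v ⬝ᵥ A *ᵥ v := by
  classical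
  refine ⟨fun hA v => hA.dotProduct_mulVec_nonneg v, fun hA => ?_⟩
  rw [← Matrix.isPositive_toEuclideanLin_iff, LinearMap.isPositive_iff_complex]
  intro v
  have hv := hA v.ofLp
  have hinner : inner ℂ (A.toEuclideanLin v) v = star v.ofLp ⬝ᵥ A *ᵥ v.ofLp := by
    rw [← hv.star_eq, EuclideanSpace.inner_eq_star_dotProduct, Matrix.star_dotProduct,
      star_star, dotProduct_comm]
    rfl
  rw [hinner]
  exact ⟨(Complex.eq_re_of_ofReal_le hv).symm, (Complex.nonneg_iff.mp hv).1⟩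

lemma complex_monotoneOn_of_hasDerivAt_nonneg {D : Set ℝ} (hD : Convex ℝ D) {f f' : ℝ → ℂ}
    (hf : ∀ u ∈ D, HasDerivAt f (f' u) u) (hf' : ∀ u ∈ D, 0 ≤ f' u) : MonotoneOn f D := by
  have hmono (L : ℂ →L[ℝ] ℝ) (hL : ∀ z, 0 ≤ z → 0 ≤ L z) : MonotoneOn (fun u => L (f u)) D :=
    have hderiv (u : ℝ) (hu : u ∈ D) : HasDerivAt (fun v => L (f v)) (L (f' u)) u :=
      L.hasFDerivAt.comp_hasDerivAt u (hf u hu)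
    monotoneOn_of_hasDerivWithinAt_nonneg hD
      (fun u hu => (hderiv u hu).continuousAt.continuousWithinAt)
      (fun u hu => (hderiv u (interior_subset hu)).hasDerivWithinAt)
      fun u hu => hL _ (hf' u (interior_subset hu))
  have hre := hmono Complex.reCLM fun z hz => (Complex.nonneg_iff.mp hz).1
  have him := hmono Complex.imCLM fun z hz => (Complex.nonneg_iff.mp hz).2.le
  have him_neg := hmono (-Complex.imCLM) fun z hz => by
    simpa using (Complex.nonneg_iff.mp hz).2.ge
  exact fun u hu v hv huv => Complex.le_def.mpr ⟨hre hu hv huv,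
    le_antisymm (him hu hv huv) (neg_le_neg_iff.mp (him_neg hu hv huv))⟩

lemma isPosDefFun_iff_posSemidef {φ : ℝ → ℂ} :
    IsPosDefFun φ ↔
      ∀ (n : ℕ) (x : Fin n → ℝ), (Matrix.of fun i j => φ (x i - x j)).PosSemidef := by
  have hform (n : ℕ) (x : Fin n → ℝ) (c : Fin n → ℂ) :
      star c ⬝ᵥ (Matrix.of fun i j => φ (x i - x j)) *ᵥ c
        = ∑ i, ∑ j, star c i * (starRingEnd ℂ) (star c j) * φ (x i - x j) := by
    simp only [dotProduct, Matrix.mulVec, Finset.mul_sum, Matrix.of_apply, Pi.star_apply,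
      starRingEnd_apply, star_star]
    exact Finset.sum_congr rfl fun i _ => Finset.sum_congr rfl fun j _ => by ring
  simp only [posSemidef_iff_forall_dotProduct_mulVec_nonneg, hform]
  exact forall₂_congr fun n x => star_involutive.surjective.forall

namespace IsPosDefFun

variable {φ ψ : ℝ → ℂ}

lemma of_eq_mul_conj {g : ℝ → ℂ} (h : ∀ s t, φ (s - t) = g s * (starRingEnd ℂ) (g t)) :
    IsPosDefFun φ := by
  intro n x c
  have hsq : ∑ i, ∑ j, c i * (starRingEnd ℂ) (c j) * φ (x i - x j)
      = (∑ i, c i * g (x i)) * (starRingEnd ℂ) (∑ j, c j * g (x j)) := by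
    simp only [h, map_sum, map_mul, Finset.sum_mul_sum]
    exact Finset.sum_congr rfl fun i _ => Finset.sum_congr rfl fun j _ => mul_mul_mul_comm ..
  rw [hsq]
  exact mul_star_self_nonneg _

lemma one : IsPosDefFun fun _ => 1 :=
  of_eq_mul_conj (g := fun _ => 1) fun _ _ => by simp

lemma exp_mul_I (t : ℝ) : IsPosDefFun fun x => Complex.exp (x * t * Complex.I) := by
  refine of_eq_mul_conj (g := fun x => Complex.exp (x * t * Complex.I)) fun r s => ?_
  rw [← Complex.exp_conj, ← Complex.exp_add]
  congr 1
  simp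
  ring

lemma const_mul (hφ : IsPosDefFun φ) {z : ℂ} (hz : 0 ≤ z) : IsPosDefFun fun x => z * φ x := by
  intro n x c
  simpa only [Finset.mul_sum, mul_left_comm z] using mul_nonneg hz (hφ n x c)

lemma comp_mul_left (hφ : IsPosDefFun φ) (s : ℝ) : IsPosDefFun fun x => φ (s * x) := by
  intro n x c
  simpa only [mul_sub] using hφ n (fun i => s * x i) c

lemma sum {ι : Type*} (s : Finset ι) {Φ : ι → ℝ → ℂ} (h : ∀ i ∈ s, IsPosDefFun (Φ i)) :
    IsPosDefFun fun x => ∑ i ∈ s, Φ i x := by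
  intro n x c
  have hswap : ∑ i, ∑ j, c i * (starRingEnd ℂ) (c j) * ∑ k ∈ s, Φ k (x i - x j)
      = ∑ k ∈ s, ∑ i, ∑ j, c i * (starRingEnd ℂ) (c j) * Φ k (x i - x j) := by
    simp only [Finset.mul_sum, Finset.sum_comm (t := s)]
  exact hswap ▸ Finset.sum_nonneg fun k hk => h k hk n x c

lemma of_tendsto {ι : Type*} {l : Filter ι} [l.NeBot] {Φ : ι → ℝ → ℂ}
    (hΦ : ∀ k, IsPosDefFun (Φ k)) (h : ∀ x, Tendsto (fun k => Φ k x) l (𝓝 (φ x))) :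
    IsPosDefFun φ := fun n x c =>
  ge_of_tendsto' (tendsto_finsetSum _ fun _ _ => tendsto_finsetSum _ fun _ _ =>
    (h _).const_mul _) fun k => hΦ k n x c

lemma integral {α : Type*} [MeasurableSpace α] {μ : Measure α} {K : α → ℝ → ℂ}
    (hint : ∀ x, Integrable (fun u => K u x) μ) (h : ∀ᵐ u ∂μ, IsPosDefFun (K u)) :
    IsPosDefFun fun x => ∫ u, K u x ∂μ := by
  intro n x c
  have hswap : ∑ i, ∑ j, c i * (starRingEnd ℂ) (c j) * ∫ u, K u (x i - x j) ∂μ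
      = ∫ u, ∑ i, ∑ j, c i * (starRingEnd ℂ) (c j) * K u (x i - x j) ∂μ := by
    rw [integral_finsetSum _ fun i _ => integrable_finsetSum _ fun j _ => (hint _).const_mul _]
    refine Finset.sum_congr rfl fun i _ => ?_
    rw [integral_finsetSum _ fun j _ => (hint _).const_mul _]
    simp only [integral_const_mul]
  rw [hswap]
  exact integral_nonneg_of_ae (h.mono fun u hu => hu n x c)

lemma sub_of_hasDerivAt {D : Set ℝ} (hD : Convex ℝ D) {G G' : ℝ → ℝ → ℂ}
    (hG : ∀ u ∈ D, ∀ x, HasDerivAt (fun v => G v x) (G' u x) u)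
    (hG' : ∀ u ∈ D, IsPosDefFun (G' u)) {a b : ℝ} (ha : a ∈ D) (hb : b ∈ D) (hab : a ≤ b) :
    IsPosDefFun fun x => G b x - G a x := by
  intro n x c
  have hmono := complex_monotoneOn_of_hasDerivAt_nonneg hD
    (f := fun u => ∑ i, ∑ j, c i * (starRingEnd ℂ) (c j) * G u (x i - x j))
    (fun u hu => HasDerivAt.fun_sum fun i _ => HasDerivAt.fun_sum fun j _ =>
      (hG u hu (x i - x j)).const_mul _)
    fun u hu => hG' u hu n x c
  simpa only [mul_sub, Finset.sum_sub_distrib, sub_nonneg] using hmono ha hb hab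

lemma mul (hφ : IsPosDefFun φ) (hψ : IsPosDefFun ψ) : IsPosDefFun fun x => φ x * ψ x :=
  isPosDefFun_iff_posSemidef.mpr fun n x => (isPosDefFun_iff_posSemidef.mp hφ n x).hadamard
    (isPosDefFun_iff_posSemidef.mp hψ n x)

lemma prod {ι : Type*} (s : Finset ι) {Φ : ι → ℝ → ℂ} (h : ∀ i ∈ s, IsPosDefFun (Φ i)) :
    IsPosDefFun fun x => ∏ i ∈ s, Φ i x := by
  simpa only [Finset.prod_fn] using
    Finset.prod_induction Φ IsPosDefFun (fun _ _ => mul) one h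

lemma pow (hφ : IsPosDefFun φ) (k : ℕ) : IsPosDefFun fun x => φ x ^ k := by
  simpa using prod (Finset.range k) fun _ _ => hφ

lemma exp (hφ : IsPosDefFun φ) : IsPosDefFun fun x => Complex.exp (φ x) := by
  refine of_tendsto (l := atTop) (fun k => sum (Finset.range k) fun i _ =>
    (hφ.pow i).const_mul (inv_nonneg.mpr (Nat.cast_nonneg i.factorial))) fun x => ?_
  simpa only [Complex.exp_eq_exp_ℂ, div_eq_inv_mul] using
    (NormedSpace.expSeries_div_hasSum_exp (φ x)).tendsto_sum_nat

lemma inv_one_sub_mul_I : IsPosDefFun fun x => (1 - x * Complex.I)⁻¹ := by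
  have hre (x : ℝ) : (x * Complex.I - 1).re < 0 := by simp
  have hintegral : IsPosDefFun fun x => ∫ t in Set.Ioi (0 : ℝ),
      Complex.exp ((x * Complex.I - 1) * t) := by
    refine integral (fun x => integrableOn_exp_mul_complex_Ioi (hre x) 0) (ae_of_all _ fun t => ?_)
    convert (exp_mul_I t).const_mul (Complex.zero_le_real.mpr (Real.exp_nonneg (-t))) using 2 with x
    rw [Complex.ofReal_exp, ← Complex.exp_add]
    congr 1
    push_cast
    ring
  convert hintegral using 2 with x
  rw [integral_exp_mul_complex_Ioi (hre x), Complex.ofReal_zero, mul_zero, Complex.exp_zero,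
    ← neg_sub (1 : ℂ), neg_div_neg_eq, one_div]

lemma inv_one_add_sq : IsPosDefFun fun x => (((1 + x ^ 2)⁻¹ : ℝ) : ℂ) := by
  convert inv_one_sub_mul_I.mul (inv_one_sub_mul_I.comp_mul_left (-1)) using 2 with x
  rw [← mul_inv]
  push_cast
  congr 1
  linear_combination (x : ℂ) ^ 2 * Complex.I_sq

end IsPosDefFun

lemma IsInfDivFun.of_log {f : ℝ → ℝ} (hpos : ∀ x, 0 < f x)
    (hlog : IsPosDefFun fun x => (Real.log (f x) : ℂ)) : IsInfDivFun f := by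
  intro r hr
  convert (hlog.const_mul (Complex.zero_le_real.mpr hr.le)).exp using 2 with x
  rw [Real.rpow_def_of_pos (hpos x), mul_comm]
  push_cast
  rfl

lemma tendsto_euler_sinh_prod (x : ℝ) :
    Tendsto (fun n : ℕ => Real.pi * x * ∏ j ∈ Finset.range n, (1 + x ^ 2 / ((j : ℝ) + 1) ^ 2))
      atTop (𝓝 (Real.sinh (Real.pi * x))) := by
  have h := (Complex.tendsto_euler_sin_prod (x * Complex.I)).mul_const (-Complex.I)
  rw [← mul_assoc, Complex.sin_mul_I, mul_assoc (Complex.sinh _), mul_neg, Complex.I_mul_I, neg_neg,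
    mul_one] at h
  refine tendsto_ofReal_iff.mp ?_
  push_cast
  refine h.congr fun n => ?_
  simp only [mul_pow, Complex.I_sq, mul_neg, mul_one, neg_div, sub_neg_eq_add]
  linear_combination
    -(Real.pi * x * ∏ j ∈ Finset.range n, (1 + (x : ℂ) ^ 2 / ((j : ℂ) + 1) ^ 2)) * Complex.I_sq

/-- The divided difference `sinh (u * x) / x` of `sinh (u * ·)` at `0`, with its limit `u` as value
at `x = 0`. The case split is needed because Lean's `sinh 0 / 0` is `0`. -/
noncomputable def sinhDiv (u x : ℝ) : ℝ := if x = 0 then u else Real.sinh (u * x) / x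

lemma sinhDiv_zero_right (u : ℝ) : sinhDiv u 0 = u := if_pos rfl

lemma sinhDiv_of_ne_zero (u : ℝ) {x : ℝ} (hx : x ≠ 0) : sinhDiv u x = Real.sinh (u * x) / x :=
  if_neg hx

lemma mul_sinhDiv (u x : ℝ) : x * sinhDiv u x = Real.sinh (u * x) := by
  rcases eq_or_ne x 0 with rfl | hx
  · simp
  · rw [sinhDiv_of_ne_zero u hx, mul_div_cancel₀ _ hx]

lemma sinhDiv_pos {u : ℝ} (hu : 0 < u) (x : ℝ) : 0 < sinhDiv u x := by
  rcases lt_trichotomy x 0 with hx | rfl | hx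
  · rw [sinhDiv_of_ne_zero u hx.ne]
    exact div_pos_of_neg_of_neg (Real.sinh_neg_iff.mpr (mul_neg_of_pos_of_neg hu hx)) hx
  · rwa [sinhDiv_zero_right]
  · rw [sinhDiv_of_ne_zero u hx.ne']
    exact div_pos (Real.sinh_pos_iff.mpr (mul_pos hu hx)) hx

lemma tendsto_sinhDiv_euler_prod (u x : ℝ) :
    Tendsto (fun n : ℕ => u * ∏ j ∈ Finset.range n, (1 + (u / (Real.pi * (j + 1)) * x) ^ 2))
      atTop (𝓝 (sinhDiv u x)) := by
  rcases eq_or_ne x 0 with rfl | hx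
  · simp [sinhDiv_zero_right]
  · have h := (tendsto_euler_sinh_prod (u * x / Real.pi)).div_const x
    rw [mul_div_cancel₀ _ Real.pi_ne_zero] at h
    rw [sinhDiv_of_ne_zero u hx]
    refine h.congr fun n => ?_
    have hfactor (j : ℕ) :
        (u * x / Real.pi) ^ 2 / ((j : ℝ) + 1) ^ 2 = (u / (Real.pi * (j + 1)) * x) ^ 2 := by
      field_simp
    simp only [hfactor]
    field_simp

lemma isPosDefFun_inv_sinhDiv {u : ℝ} (hu : 0 < u) :
    IsPosDefFun fun x => (((sinhDiv u x)⁻¹ : ℝ) : ℂ) := by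
  have hprod (n : ℕ) := IsPosDefFun.prod (Finset.range n) fun j _ =>
    IsPosDefFun.inv_one_add_sq.comp_mul_left (u / (Real.pi * (j + 1)))
  have hinv : (0 : ℂ) ≤ (u⁻¹ : ℝ) := Complex.zero_le_real.mpr (inv_nonneg.mpr hu.le)
  refine IsPosDefFun.of_tendsto (l := atTop) (fun n => (hprod n).const_mul hinv) fun x => ?_
  have h := (tendsto_sinhDiv_euler_prod u x).inv₀ (sinhDiv_pos hu x).ne'
  simpa only [mul_inv, ← Finset.prod_inv_distrib, Complex.ofReal_mul, Complex.ofReal_prod]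
    using h.ofReal

lemma hasDerivAt_sinhDiv (u x : ℝ) :
    HasDerivAt (fun v => sinhDiv v x) (Real.cosh (u * x)) u := by
  rcases eq_or_ne x 0 with rfl | hx
  · simpa [sinhDiv_zero_right] using hasDerivAt_id' u
  · simpa [sinhDiv_of_ne_zero, hx] using (hasDerivAt_mul_const (x := u) x).sinh.div_const x

lemma hasDerivAt_log_sinhDiv {u : ℝ} (hu : 0 < u) (x : ℝ) :
    HasDerivAt (fun v => Real.log (sinhDiv v x)) (Real.cosh (u * x) / sinhDiv u x) u :=
  (hasDerivAt_sinhDiv u x).log (sinhDiv_pos hu x).ne'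

lemma hasDerivAt_cosh_div_sinhDiv {u : ℝ} (hu : 0 < u) (x : ℝ) :
    HasDerivAt (fun v => Real.cosh (v * x) / sinhDiv v x) (-(sinhDiv u x)⁻¹ ^ 2) u := by
  have hne := (sinhDiv_pos hu x).ne'
  have hcosh := (hasDerivAt_mul_const (x := u) x).cosh
  refine (hcosh.fun_div (hasDerivAt_sinhDiv u x) hne).congr_deriv ?_
  have hsq := Real.cosh_sq (u * x)
  rw [← mul_sinhDiv u x] at hsq ⊢
  generalize Real.cosh (u * x) = C at hsq ⊢
  field_simp
  linear_combination -hsq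

lemma isPosDefFun_cosh_div_sinhDiv_sub {u v : ℝ} (hu : 0 < u) (huv : u ≤ v) :
    IsPosDefFun fun x => ((Real.cosh (u * x) / sinhDiv u x
      - Real.cosh (v * x) / sinhDiv v x : ℝ) : ℂ) := by
  convert IsPosDefFun.sub_of_hasDerivAt (convex_Ioi 0)
    (fun w hw x => (hasDerivAt_cosh_div_sinhDiv hw x).ofReal_comp.fun_neg)
    (fun w hw => ?_) hu (hu.trans_le huv) huv using 2 with x
  · push_cast
    ring
  · simpa using (isPosDefFun_inv_sinhDiv hw).pow 2

lemma isPosDefFun_log_sinhDiv_sub_sub {a b h : ℝ} (hb : 0 < b) (hba : b ≤ a) (hh : 0 ≤ h) :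
    IsPosDefFun fun x => ((Real.log (sinhDiv a x) - Real.log (sinhDiv (a + h) x)
      - (Real.log (sinhDiv b x) - Real.log (sinhDiv (b + h) x)) : ℝ) : ℂ) := by
  have hderiv : ∀ w ∈ Set.Ioi (0 : ℝ), ∀ x, HasDerivAt
      (fun v => Real.log (sinhDiv v x) - Real.log (sinhDiv (v + h) x))
      (Real.cosh (w * x) / sinhDiv w x - Real.cosh ((w + h) * x) / sinhDiv (w + h) x) w :=
    fun w hw x => (hasDerivAt_log_sinhDiv hw x).sub
      ((hasDerivAt_log_sinhDiv (add_pos_of_pos_of_nonneg hw hh) x).comp_add_const w h)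
  simpa only [Complex.ofReal_sub] using IsPosDefFun.sub_of_hasDerivAt (convex_Ioi 0)
    (fun w hw x => (hderiv w hw x).ofReal_comp)
    (fun w hw => isPosDefFun_cosh_div_sinhDiv_sub hw (le_add_of_nonneg_right hh))
    hb (hb.trans_le hba) hba

theorem sinh_two_factor_infdiv (a b c d : ℝ) (ha : 0 < a) (hb : 0 < b) (hc : 0 < c)
    (hd : 0 < d) (hmax : max (max a b) c < d) (hsum : a + c = b + d)
    (f : ℝ → ℝ)
    (hf : ∀ x : ℝ, x ≠ 0 →
      f x = Real.sinh (a * x) * Real.sinh (c * x) / (Real.sinh (b * x) * Real.sinh (d * x)))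
    (hf0 : f 0 = a * c / (b * d)) :
    IsInfDivFun f := by
  obtain ⟨⟨had, -⟩, hcd⟩ : (a < d ∧ b < d) ∧ c < d := by simpa using hmax
  have hf_eq (x : ℝ) : f x = sinhDiv a x * sinhDiv c x / (sinhDiv b x * sinhDiv d x) := by
    rcases eq_or_ne x 0 with rfl | hx
    · simpa only [sinhDiv_zero_right] using hf0
    · rw [hf x hx]
      simp only [← mul_sinhDiv]
      field_simp
  have hlog (x : ℝ) : Real.log (f x) = Real.log (sinhDiv a x) - Real.log (sinhDiv d x)
      - (Real.log (sinhDiv b x) - Real.log (sinhDiv c x)) := by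
    have hne {u : ℝ} (hu : 0 < u) : sinhDiv u x ≠ 0 := (sinhDiv_pos hu x).ne'
    rw [hf_eq, Real.log_div (mul_ne_zero (hne ha) (hne hc)) (mul_ne_zero (hne hb) (hne hd)),
      Real.log_mul (hne ha) (hne hc), Real.log_mul (hne hb) (hne hd)]
    ring
  refine IsInfDivFun.of_log (fun x => ?_) ?_
  · rw [hf_eq]
    exact div_pos (mul_pos (sinhDiv_pos ha x) (sinhDiv_pos hc x))
      (mul_pos (sinhDiv_pos hb x) (sinhDiv_pos hd x))
  · obtain rfl : d = a + (c - b) := by linarith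
    simpa only [hlog, add_sub_cancel] using
      isPosDefFun_log_sinhDiv_sub_sub hb (by linarith : b ≤ a) (by linarith : 0 ≤ c - b)
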